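/- Let A : ℝ^d → (ℝ^d →L[ℝ] ℝ) be a C¹ map with Fréchet derivative DA : ℝ^d → (ℝ^d →L[ℝ] (ℝ^d →L[ℝ] ℝ)). Let γ : [0,1] → ℝ^d be a C² loop with γ(0) = γ(1) and γ'(0) = γ'(1), and let V : [0,1] → ℝ^d be a C¹ variation field with V(0) = V(1). Then the function s ↦ ∫₀¹ (½‖γ'(t) + sV'(t)‖² + A(γ(t) + sV(t))(γ'(t) + sV'(t))) dt is differentiable at s = 0 with derivative ∫₀¹ (⟪−γ''(t), V(t)⟫ + (DA(γ(t))(V(t)))(γ'(t)) − (DA(γ(t))(γ'(t)))(V(t))) dt. -/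

import Mathlib

/-!
Since the integrand of `W(γ + sV)` and its `s`-derivative are jointly continuous in `(s, t)`, one may
differentiate under the integral sign (`hasDerivAt_integral_of_continuous_deriv`); at `s = 0` this
gives the integrand `⟪γ', V'⟫ + (DA(γ)V)(γ') + A(γ)(V')`. It differs from
`⟪-γ'', V⟫ + (DA(γ)V)(γ') - (DA(γ)γ')(V)` by exactly the derivative of the periodic function
`t ↦ ⟪γ'(t), V(t)⟫ + A(γ(t))(V(t))`, whose integral over `[0, 1]` vanishes.
-/

open scoped RealInnerProductSpace

/-- Differentiation under the integral sign over a compact interval: joint continuity of the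
partial derivative bounds it on `[x₀ - 1, x₀ + 1] × [a, b]`, which supplies the dominating
constant. -/
lemma hasDerivAt_integral_of_continuous_deriv {F F' : ℝ → ℝ → ℝ} (x₀ a b : ℝ)
    (hF : ∀ s, Continuous (F s)) (hF' : Continuous fun p : ℝ × ℝ => F' p.1 p.2)
    (hd : ∀ s t, HasDerivAt (fun s => F s t) (F' s t) s) :
    HasDerivAt (fun s => ∫ t in a..b, F s t) (∫ t in a..b, F' x₀ t) x₀ := by
  obtain ⟨C, hC⟩ := ((isCompact_closedBall x₀ 1).prod
    (isCompact_uIcc (a := a) (b := b))).exists_bound_of_continuousOn hF'.continuousOn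
  refine (intervalIntegral.hasDerivAt_integral_of_dominated_loc_of_deriv_le
    (bound := fun _ => C) (Metric.closedBall_mem_nhds x₀ one_pos)
    (.of_forall fun s => (hF s).aestronglyMeasurable) ((hF x₀).intervalIntegrable _ _)
    (hF'.comp (by fun_prop : Continuous fun t : ℝ => (x₀, t))).aestronglyMeasurable
    (.of_forall fun t ht s hs => hC (s, t) ⟨hs, Set.uIoc_subset_uIcc ht⟩)
    (by simp) (.of_forall fun t _ s _ => hd s t)).2

lemma hasDerivAt_magneticLagrangian {E : Type*} [NormedAddCommGroup E]
    [InnerProductSpace ℝ E] {A : E → (E →L[ℝ] ℝ)} (hA : Differentiable ℝ A) (x u v w : E) (s : ℝ) :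
    HasDerivAt (fun s : ℝ => (1/2) * ‖u + s • w‖ ^ 2 + A (x + s • v) (u + s • w))
      (⟪u + s • w, w⟫ +
        (fderiv ℝ A (x + s • v) v (u + s • w) + A (x + s • v) w)) s := by
  have h1 : HasDerivAt (fun s : ℝ => u + s • w) w s := by
    simpa using ((hasDerivAt_id s).smul_const w).const_add u
  have h2 : HasDerivAt (fun s : ℝ => x + s • v) v s := by
    simpa using ((hasDerivAt_id s).smul_const v).const_add x
  have h3 : HasDerivAt (fun s : ℝ => A (x + s • v)) (fderiv ℝ A (x + s • v) v) s :=
    (hA (x + s • v)).hasFDerivAt.comp_hasDerivAt s h2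
  have h4 : HasDerivAt (fun s : ℝ => (1/2) * ‖u + s • w‖ ^ 2) ⟪u + s • w, w⟫ s := by
    have h := h1.norm_sq.const_mul (1/2 : ℝ)
    rwa [show (1/2 : ℝ) * (2 * ⟪u + s • w, w⟫) = ⟪u + s • w, w⟫ by ring] at h
  exact h4.add (h3.clm_apply h1)

/-- First variation of the magnetic action `W(γ) = ∫₀¹ (½‖γ'‖² + A(γ)(γ')) dt` at a
C² periodic loop `γ` along a periodic C¹ variation field `V`:
`d/ds|₀ W(γ + sV) = ∫₀¹ (⟪-γ'', V⟫ + (DA(γ)V)(γ') − (DA(γ)γ')(V)) dt`. -/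
theorem magnetic_action_first_variation {d : ℕ}
    (A : EuclideanSpace ℝ (Fin d) → (EuclideanSpace ℝ (Fin d) →L[ℝ] ℝ))
    (hA : ContDiff ℝ 1 A)
    (γ : ℝ → EuclideanSpace ℝ (Fin d)) (hγ : ContDiff ℝ 2 γ)
    (hloop : γ 0 = γ 1) (hloop' : deriv γ 0 = deriv γ 1)
    (V : ℝ → EuclideanSpace ℝ (Fin d)) (hV : ContDiff ℝ 1 V) (hVper : V 0 = V 1) :
    HasDerivAt
      (fun s : ℝ => ∫ t in (0:ℝ)..1,
        ((1/2) * ‖deriv γ t + s • deriv V t‖ ^ 2 +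
          A (γ t + s • V t) (deriv γ t + s • deriv V t)))
      (∫ t in (0:ℝ)..1,
        (⟪-(deriv (deriv γ) t), V t⟫ +
          (fderiv ℝ A (γ t) (V t)) (deriv γ t) -
          (fderiv ℝ A (γ t) (deriv γ t)) (V t)))
      0 := by
  have hγd : ∀ t, HasDerivAt γ (deriv γ t) t := fun t =>
    (hγ.differentiable (by norm_num) t).hasDerivAt
  have hγ' : ContDiff ℝ 1 (deriv γ) := ContDiff.deriv' (n := 1) (by simpa [one_add_one_eq_two] using hγ)
  have hγdd : ∀ t, HasDerivAt (deriv γ) (deriv (deriv γ) t) t := fun t =>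
    (hγ'.differentiable (by norm_num) t).hasDerivAt
  have hVd : ∀ t, HasDerivAt V (deriv V t) t := fun t =>
    (hV.differentiable (by norm_num) t).hasDerivAt
  have hAd : ∀ x, HasFDerivAt A (fderiv ℝ A x) x := fun x =>
    (hA.differentiable (by norm_num) x).hasFDerivAt
  have cA : Continuous A := hA.continuous
  have cDA : Continuous (fderiv ℝ A) := hA.continuous_fderiv (by norm_num)
  have cγ : Continuous γ := hγ.continuous
  have cγ' : Continuous (deriv γ) := hγ'.continuous
  have cγ'' : Continuous (deriv (deriv γ)) := hγ'.continuous_deriv (by norm_num)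
  have cV : Continuous V := hV.continuous
  have cV' : Continuous (deriv V) := hV.continuous_deriv (by norm_num)
  have key := hasDerivAt_integral_of_continuous_deriv 0 0 1
    (F := fun s t => (1/2) * ‖deriv γ t + s • deriv V t‖ ^ 2 +
          A (γ t + s • V t) (deriv γ t + s • deriv V t))
    (F' := fun s t => ⟪deriv γ t + s • deriv V t, deriv V t⟫ +
          (fderiv ℝ A (γ t + s • V t) (V t) (deriv γ t + s • deriv V t) +
            A (γ t + s • V t) (deriv V t)))
    (fun s => by fun_prop) (by fun_prop)
    (fun s t => hasDerivAt_magneticLagrangian (hA.differentiable (by norm_num)) _ _ _ _ s)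
  have hg : ∀ t, HasDerivAt (fun t => ⟪deriv γ t, V t⟫ + A (γ t) (V t))
      ((⟪deriv γ t, deriv V t⟫ + ⟪deriv (deriv γ) t, V t⟫) +
        (fderiv ℝ A (γ t) (deriv γ t) (V t) + A (γ t) (deriv V t))) t := fun t =>
    ((hγdd t).inner ℝ (hVd t)).add
      (((hAd (γ t)).comp_hasDerivAt t (hγd t)).clm_apply (hVd t))
  have hint := intervalIntegral.integral_eq_sub_of_hasDerivAt (a := 0) (b := 1)
    (fun t _ => hg t) (Continuous.intervalIntegrable (by fun_prop) _ _)
  rw [← hloop, ← hloop', ← hVper, sub_self] at hint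
  convert key using 1
  simp only [zero_smul, add_zero]
  rw [← sub_eq_zero, ← neg_eq_zero, neg_sub, ← intervalIntegral.integral_sub
    (Continuous.intervalIntegrable (by fun_prop) _ _)
    (Continuous.intervalIntegrable (by fun_prop) _ _)]
  refine Eq.trans ?_ hint
  congr 1 with t
  simp only [inner_neg_left]
  ring
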